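/- arXiv:math/0511345 — 2 statements merged into one kernel-verified Lean document; each statement's English description precedes it below -/
import Mathlib

section
/- Let R be a scalar local noetherian semiprime ring of finite global dimension. Then R is a domain. (Walker's theorem.) -/
open CategoryTheory Opposite

universe u

/-!
A nonsingular ring `R` embeds into a nonsingular injective module `E`. The length of `Hom_R(M, E)`
over `End_R(E)` is additive in `M` on short exact sequences. It is at most `1` when `M` is uniform,
since a nonzero homomorphism from a uniform module to `E` is injective and so, by injectivity of
`E`, generates `Hom_R(M, E)`. A noetherian module embeds into a finite product of uniform quotients,
so its value is finite, and `R` has a cyclic quotient of value exactly `1`. If `R` is local and that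
quotient has finite projective dimension, its value is also a multiple of the value `d` of `R`,
because finitely generated projectives are free. Hence `d = 1`, that is, `E` is simple over
`End_R(E)`, and all nonzero elements of `E` have the same annihilator. A copy of `R` in `E` contains
an element with zero annihilator, so `R` has no zero divisors.
-/

universe v

section Essential

variable {R M M' : Type*} [Ring R] [AddCommGroup M] [Module R M] [AddCommGroup M'] [Module R M']

/-- A submodule is essential (or large) if it meets every nonzero submodule nontrivially. -/
def IsEssential (N : Submodule R M) : Prop :=
  ∀ ⦃L : Submodule R M⦄, Disjoint N L → L = ⊥

theorem IsEssential.mono {N N' : Submodule R M} (hN : IsEssential N) (h : N ≤ N') :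
    IsEssential N' :=
  fun _ hL ↦ hN (hL.mono_left h)

theorem IsEssential.comap {N : Submodule R M'} (hN : IsEssential N) (f : M →ₗ[R] M') :
    IsEssential (N.comap f) := by
  intro L hL
  have hmap : L.map f = ⊥ := by
    refine hN (Submodule.disjoint_def.2 ?_)
    rintro _ hx ⟨x, hxL, rfl⟩
    rw [Submodule.disjoint_def.1 hL x hx hxL, map_zero]
  have hle : L ≤ N.comap f := Submodule.map_le_iff_le_comap.1 (hmap.trans_le bot_le)
  exact hL.eq_bot_of_ge hle

theorem exists_isEssential_range_mkQ_comp {f : M →ₗ[R] M'} (hf : Function.Injective f) :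
    ∃ K : Submodule R M', Function.Injective (K.mkQ ∘ₗ f) ∧
      IsEssential (LinearMap.range (K.mkQ ∘ₗ f)) := by
  obtain ⟨K, hK, hmax⟩ : ∃ K, Maximal (fun K ↦ Disjoint K (LinearMap.range f)) K := by
    refine zorn_le₀ {K | Disjoint K (LinearMap.range f)} fun c hc hchain ↦
      ⟨sSup c, ?_, fun _ ↦ le_sSup⟩
    exact hchain.directedOn.disjoint_sSup_left.2 hc
  refine ⟨K, ?_, fun L hL ↦ ?_⟩
  · refine (injective_iff_map_eq_zero _).2 fun m hm ↦ hf ?_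
    rw [Submodule.disjoint_def.1 hK _ ((Submodule.Quotient.mk_eq_zero K).1 hm) ⟨m, rfl⟩, map_zero]
  · have hcomap : Disjoint (L.comap K.mkQ) (LinearMap.range f) := by
      refine Submodule.disjoint_def.2 ?_
      rintro _ hx ⟨m, rfl⟩
      have hfm : K.mkQ (f m) = 0 := Submodule.disjoint_def.1 hL _ ⟨m, rfl⟩ hx
      exact Submodule.disjoint_def.1 hK _ ((Submodule.Quotient.mk_eq_zero K).1 hfm) ⟨m, rfl⟩
    have hle : L.comap K.mkQ ≤ K := hmax hcomap (Submodule.le_comap_mkQ K L)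
    rw [← Submodule.map_comap_eq_of_surjective K.mkQ_surjective L, eq_bot_iff,
      Submodule.map_le_iff_le_comap, Submodule.comap_bot, Submodule.ker_mkQ]
    exact hle

end Essential

section Nonsingular

variable {R M M' : Type*} [Ring R] [AddCommGroup M] [Module R M] [AddCommGroup M'] [Module R M']

variable (R M) in
/-- A module is nonsingular if no nonzero element has an essential annihilator. -/
def IsNonsingular : Prop :=
  ∀ m : M, IsEssential (Ideal.torsionOf R M m) → m = 0

theorem IsNonsingular.eq_zero_of_le_ker (hM' : IsNonsingular R M') {N : Submodule R M}
    (hN : IsEssential N) {f : M →ₗ[R] M'} (hf : N ≤ LinearMap.ker f) : f = 0 := by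
  ext m
  refine hM' (f m) ((hN.comap (LinearMap.toSpanSingleton R M m)).mono fun r hr ↦ ?_)
  rw [Ideal.mem_torsionOf_iff, ← map_smul]
  exact hf hr

theorem IsNonsingular.of_isEssential_range (hM : IsNonsingular R M) {f : M →ₗ[R] M'}
    (hf : Function.Injective f) (hrange : IsEssential (LinearMap.range f)) :
    IsNonsingular R M' := by
  intro m' hm'
  suffices Submodule.span R {m'} = ⊥ from Submodule.span_singleton_eq_bot.1 this
  refine hrange (Submodule.disjoint_def.2 ?_)
  rintro _ ⟨m, rfl⟩ hm
  obtain ⟨r, hr⟩ := Submodule.mem_span_singleton.1 hm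
  have hess : IsEssential (Ideal.torsionOf R M m) := by
    refine (hm'.comap (LinearMap.toSpanSingleton R R r)).mono fun s hs ↦ hf ?_
    have hs : (s * r) • m' = 0 := hs
    rw [map_zero, LinearMap.toSpanSingleton_apply, map_smul, ← hr, ← mul_smul, hs]
  rw [hM m hess, map_zero]

theorem isNonsingular_self_of_semiprime {R : Type*} [Ring R] [IsNoetherianRing R]
    (hR : ∀ a : R, (∀ r : R, a * r * a = 0) → a = 0) : IsNonsingular R R := by
  by_contra hsing
  simp only [IsNonsingular, not_forall] at hsing
  obtain ⟨a₀, ha₀⟩ := hsing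
  obtain ⟨_, ⟨a, ⟨hess, ha⟩, rfl⟩, hmax⟩ := set_has_maximal_iff_noetherian.2 ‹_›
    (Ideal.torsionOf R R '' {a | IsEssential (Ideal.torsionOf R R a) ∧ a ≠ 0})
    ⟨_, a₀, exists_prop.1 ha₀, rfl⟩
  refine ha (hR a fun r ↦ by_contra fun hara ↦ ?_)
  have hle : Ideal.torsionOf R R a ≤ Ideal.torsionOf R R (a * r * a) := by
    intro t ht
    rw [Ideal.mem_torsionOf_iff, smul_eq_mul] at ht ⊢
    rw [mul_assoc, ← mul_assoc, ht, zero_mul]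
  have heq : Ideal.torsionOf R R a = Ideal.torsionOf R R (a * r * a) :=
    eq_of_le_of_not_lt hle (hmax _ ⟨_, ⟨hess.mono hle, hara⟩, rfl⟩)
  have hdisj : Disjoint (Ideal.torsionOf R R a) (Ideal.span {a * r}) := by
    refine Submodule.disjoint_def.2 fun x hx hxar ↦ ?_
    obtain ⟨t, rfl⟩ := Ideal.mem_span_singleton'.1 hxar
    have ht : t ∈ Ideal.torsionOf R R a := by
      rw [heq]
      simpa [mul_assoc] using hx
    rw [← mul_assoc, show t * a = 0 from ht, zero_mul]
  exact hara (by rw [Ideal.span_singleton_eq_bot.1 (hess hdisj), zero_mul])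

theorem exists_injective_isNonsingular {R M : Type u} [Ring R] [AddCommGroup M] [Module R M]
    (hM : IsNonsingular R M) :
    ∃ (E : ModuleCat.{u} R) (f : M →ₗ[R] E), Module.Injective R E ∧ IsNonsingular R E ∧
      Function.Injective f := by
  let Q : ModuleCat.{u} R := Injective.under (ModuleCat.of R M)
  have : Injective Q := inferInstanceAs (Injective (Injective.under (ModuleCat.of R M)))
  have hQ : Module.Injective R Q := Module.injective_module_of_injective_object R Q
  let i : M →ₗ[R] Q := (Injective.ι (ModuleCat.of R M)).hom
  have hi : Function.Injective i := (ModuleCat.mono_iff_injective _).1 inferInstance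
  obtain ⟨K, hKi, hess⟩ := exists_isEssential_range_mkQ_comp hi
  have hE : IsNonsingular R (Q ⧸ K) := hM.of_isEssential_range hKi hess
  obtain ⟨h, hh⟩ := Module.Injective.extension_property R Q _ _ (K.mkQ ∘ₗ i) hKi i
  have hsection : K.mkQ ∘ₗ h = LinearMap.id := by
    refine sub_eq_zero.1 (hE.eq_zero_of_le_ker hess ?_)
    rintro _ ⟨m, rfl⟩
    have hhm : h (K.mkQ (i m)) = i m := LinearMap.congr_fun hh m
    simp [-Submodule.mkQ_apply, hhm]
  refine ⟨ModuleCat.of R (Q ⧸ K), K.mkQ ∘ₗ i, ⟨fun X Y _ _ _ _ f hf g ↦ ?_⟩, hE, hKi⟩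
  obtain ⟨k, hk⟩ := hQ.out f hf (h ∘ₗ g)
  exact ⟨K.mkQ ∘ₗ k, fun x ↦ by
    rw [LinearMap.comp_apply, hk]; exact LinearMap.congr_fun hsection (g x)⟩

end Nonsingular

section HomLength

variable (R M E : Type*) [Ring R] [AddCommGroup M] [Module R M] [AddCommGroup E] [Module R E]

/-- The length of `Hom_R(M, E)` over the endomorphism ring of `E`. For injective `E` it is additive
on short exact sequences of `R`-modules. -/
noncomputable def homLength : ℕ∞ :=
  Module.length (Module.End R E) (M →ₗ[R] E)

theorem homLength_self : homLength R R E = Module.length (Module.End R E) E :=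
  (LinearMap.ringLmapEquivSelf R (Module.End R E) E).length_eq

variable {R M}

theorem homLength_eq_card_mul {ι : Type*} (b : Module.Basis ι R M) :
    homLength R M E = ENat.card ι * Module.length (Module.End R E) E := by
  rw [homLength, ← (b.constr (M' := E) (Module.End R E)).length_eq, Module.length_pi]

variable {E}

theorem homLength_pi {ι : Type*} [Fintype ι] (M : ι → Type*) [∀ i, AddCommGroup (M i)]
    [∀ i, Module R (M i)] : homLength R (∀ i, M i) E = ∑ i, homLength R (M i) E := by
  classical
  rw [homLength, ← (LinearMap.lsum R M (M := E) (Module.End R E)).length_eq,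
    Module.length_pi_of_fintype]
  rfl

end HomLength

section HomLengthInjective

variable {R M M' M'' : Type*} [Ring R] [AddCommGroup M] [Module R M] [AddCommGroup M']
  [Module R M'] [AddCommGroup M''] [Module R M''] [Small.{v} R] {E : Type v} [AddCommGroup E]
  [Module R E] [Module.Injective R E]

theorem homLength_eq_add_of_exact {f : M' →ₗ[R] M} {g : M →ₗ[R] M''}
    (hf : Function.Injective f) (hg : Function.Surjective g) (h : Function.Exact f g) :
    homLength R M E = homLength R M'' E + homLength R M' E := by
  refine Module.length_eq_add_of_exact (LinearMap.lcomp (Module.End R E) E g)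
    (LinearMap.lcomp (Module.End R E) E f) (LinearMap.lcomp_injective_of_surjective g hg)
    (fun φ ↦ Module.Injective.extension_property R E _ _ f hf φ) fun φ ↦ ⟨fun hφ ↦ ?_, ?_⟩
  · refine ⟨((LinearMap.range f).liftQ φ (LinearMap.range_le_ker_iff.2 hφ)).comp
      (h.linearEquivOfSurjective hg).symm.toLinearMap, ?_⟩
    ext x
    simp
  · rintro ⟨ψ, rfl⟩
    ext x
    simp [h.apply_apply_eq_zero]

theorem homLength_le_of_injective {f : M' →ₗ[R] M} (hf : Function.Injective f) :
    homLength R M' E ≤ homLength R M E :=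
  Module.length_le_of_surjective (LinearMap.lcomp (Module.End R E) E f)
    (Module.Injective.extension_property R E _ _ f hf)

theorem homLength_le_sum_of_iInf_eq_bot {ι : Type*} [Fintype ι] {K : ι → Submodule R M}
    (hK : ⨅ i, K i = ⊥) : homLength R M E ≤ ∑ i, homLength R (M ⧸ K i) E := by
  rw [← homLength_pi]
  refine homLength_le_of_injective (f := LinearMap.pi fun i ↦ (K i).mkQ) ?_
  rw [← LinearMap.ker_eq_bot, LinearMap.ker_pi]
  simpa only [Submodule.ker_mkQ] using hK

end HomLengthInjective

section Uniform

/-- A module is uniform if it is nonzero and any two nonzero submodules meet nontrivially, in other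
words if its zero submodule is irreducible. -/
def IsUniform (R M : Type*) [Ring R] [AddCommGroup M] [Module R M] : Prop :=
  InfIrred (⊥ : Submodule R M)

variable {R M : Type*} [Ring R] [AddCommGroup M] [Module R M]

theorem isUniform_quotient {K : Submodule R M} (hK : InfIrred K) : IsUniform R (M ⧸ K) := by
  have hinj := Submodule.comap_injective_of_surjective K.mkQ_surjective
  refine ⟨fun hmax ↦ hK.1 ?_, fun L L' hLL' ↦ ?_⟩
  · rw [isMax_iff_eq_top] at hmax ⊢
    simpa using congrArg (Submodule.comap K.mkQ) hmax
  · have hcomap : L.comap K.mkQ ⊓ L'.comap K.mkQ = K := by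
      rw [← Submodule.comap_inf, hLL', Submodule.comap_bot, Submodule.ker_mkQ]
    exact (hK.2 hcomap).imp (fun h ↦ hinj (by simpa using h)) (fun h ↦ hinj (by simpa using h))

theorem IsUniform.isEssential (hM : IsUniform R M) {N : Submodule R M} (hN : N ≠ ⊥) :
    IsEssential N :=
  fun _ hL ↦ (hM.2 hL.eq_bot).resolve_left hN

theorem IsUniform.injective_of_ne_zero {E : Type*} [AddCommGroup E] [Module R E]
    (hM : IsUniform R M) (hE : IsNonsingular R E) {f : M →ₗ[R] E} (hf : f ≠ 0) :
    Function.Injective f :=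
  LinearMap.ker_eq_bot.1 <| by_contra fun hker ↦
    hf (hE.eq_zero_of_le_ker (hM.isEssential hker) le_rfl)

variable [Small.{v} R] {E : Type v} [AddCommGroup E] [Module R E] [Module.Injective R E]

theorem IsUniform.homLength_eq_one [Nontrivial (M →ₗ[R] E)] (hM : IsUniform R M)
    (hE : IsNonsingular R E) : homLength R M E = 1 := by
  rw [homLength, Module.length_eq_one_iff, isSimpleModule_iff_toSpanSingleton_surjective]
  exact ⟨‹_›, fun f hf ↦
    Module.Injective.extension_property R E _ _ f (hM.injective_of_ne_zero hE hf)⟩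

theorem IsUniform.homLength_eq_zero_or_one (hM : IsUniform R M) (hE : IsNonsingular R E) :
    homLength R M E = 0 ∨ homLength R M E = 1 := by
  rcases subsingleton_or_nontrivial (M →ₗ[R] E) with _ | _
  · exact .inl (Module.length_eq_zero)
  · exact .inr (hM.homLength_eq_one hE)

variable [IsNoetherian R M]

variable (R M E) in
theorem exists_isUniform_quotient_homLength_le_sum :
    ∃ s : Finset (Submodule R M), (∀ K ∈ s, IsUniform R (M ⧸ K)) ∧
      homLength R M E ≤ ∑ K : s, homLength R (M ⧸ K.1) E := by
  obtain ⟨s, hs, hirred⟩ := exists_infIrred_decomposition (⊥ : Submodule R M)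
  refine ⟨s, fun K hK ↦ isUniform_quotient (hirred hK), ?_⟩
  refine homLength_le_sum_of_iInf_eq_bot (K := fun K : s ↦ K.1) ?_
  rw [← hs, Finset.inf_eq_iInf, iInf_subtype]
  rfl

variable (M) in
theorem homLength_ne_top (hE : IsNonsingular R E) : homLength R M E ≠ ⊤ := by
  obtain ⟨s, hs, hle⟩ := exists_isUniform_quotient_homLength_le_sum R M E
  refine ne_top_of_le_ne_top (WithTop.sum_ne_top.2 fun K _ ↦ ?_) hle
  obtain h | h := (hs K.1 K.2).homLength_eq_zero_or_one hE
  · exact h ▸ ENat.zero_ne_top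
  · exact h ▸ ENat.one_ne_top

theorem exists_homLength_quotient_eq_one [Nontrivial (M →ₗ[R] E)] (hE : IsNonsingular R E) :
    ∃ K : Submodule R M, homLength R (M ⧸ K) E = 1 := by
  obtain ⟨s, hs, hle⟩ := exists_isUniform_quotient_homLength_le_sum R M E
  by_contra! hne
  have hzero : homLength R M E = 0 := by
    rw [← nonpos_iff_eq_zero]
    refine hle.trans_eq (Finset.sum_eq_zero fun K _ ↦ ?_)
    exact ((hs K.1 K.2).homLength_eq_zero_or_one hE).resolve_right (hne K.1)
  exact not_subsingleton (M →ₗ[R] E) (Module.length_eq_zero_iff.1 hzero)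

end Uniform

section LocalRing

variable {R M : Type*} [Ring R] [AddCommGroup M] [Module R M]

instance isDedekindFiniteMonoid_of_isLocalRing [IsLocalRing R] : IsDedekindFiniteMonoid R where
  mul_eq_one_symm {x y} hxy := by
    have hidem : IsIdempotentElem (y * x) := by
      rw [IsIdempotentElem, mul_assoc, ← mul_assoc x, hxy, one_mul]
    rcases IsLocalRing.isUnit_or_isUnit_of_add_one (add_sub_cancel (y * x) 1) with h | h
    · exact h.mul_left_cancel (hidem.eq.trans (mul_one _).symm)
    · have hyx : y * x = 0 := h.mul_left_eq_zero.1 hidem.mul_one_sub_self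
      have : (1 : R) = 0 := by
        calc (1 : R) = x * (y * x) * y := by rw [mul_assoc, mul_assoc, hxy, mul_one, hxy]
          _ = 0 := by rw [hyx, mul_zero, zero_mul]
      exact (one_ne_zero this).elim

theorem mem_jacobson_of_not_isUnit [IsLocalRing R] {x : R} (hx : ¬ IsUnit x) :
    x ∈ Ring.jacobson R := by
  rw [← Ideal.jacobson_bot, Ideal.mem_jacobson_iff]
  intro y
  have hyx : ¬ IsUnit (-y * x) := fun ⟨u, hu⟩ ↦
    hx (.of_mul_eq_one_right (↑u⁻¹ * -y) (by rw [mul_assoc, ← hu, Units.inv_mul]))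
  obtain ⟨u, hu⟩ : IsUnit (y * x + 1) :=
    (IsLocalRing.isUnit_or_isUnit_of_add_one (by noncomm_ring)).resolve_left hyx
  refine ⟨↑u⁻¹, ?_⟩
  rw [Submodule.mem_bot, mul_assoc, ← mul_add_one, ← hu, Units.inv_mul, sub_self]

theorem isLocalRing_of_isUnit_of_notMem_jacobson [Nontrivial R]
    (h : ∀ x : R, x ∉ Ring.jacobson R → IsUnit x) : IsLocalRing R := by
  refine .of_isUnit_or_isUnit_one_sub_self fun x ↦ or_iff_not_imp_left.2 fun hx ↦ h _ fun hx' ↦ ?_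
  have hx : x ∈ Ring.jacobson R := by_contra fun h' ↦ hx (h x h')
  have hone : (1 : R) ∈ Ring.jacobson R := by simpa using add_mem hx hx'
  exact (Ring.jacobson_lt_top R).ne ((Ideal.eq_top_iff_one _).2 hone)

theorem mem_span_erase_of_linearCombination_eq_zero [DecidableEq M] {s : Finset M} {c : s →₀ R}
    (hc : Finsupp.linearCombination R Subtype.val c = 0) {m : s} (hm : IsUnit (c m)) :
    (m : M) ∈ Submodule.span R (s.erase m : Set M) := by
  refine (Submodule.smul_mem_iff_of_isUnit _ hm).1 ?_
  rw [← Finsupp.single_add_erase m c, map_add, Finsupp.linearCombination_single] at hc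
  rw [eq_neg_of_add_eq_zero_left hc, Finsupp.linearCombination_apply]
  refine neg_mem (Submodule.sum_mem _ fun i hi ↦ Submodule.smul_mem _ _ (Submodule.subset_span ?_))
  rw [Finsupp.support_erase, Finset.mem_erase] at hi
  exact Finset.mem_erase.2 ⟨Subtype.coe_ne_coe.2 hi.1, i.2⟩

variable (R M) in
theorem exists_span_eq_top_ker_linearCombination_le [IsLocalRing R] [Module.Finite R M] :
    ∃ s : Finset M, Submodule.span R (s : Set M) = ⊤ ∧
      LinearMap.ker (Finsupp.linearCombination R ((↑) : s → M)) ≤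
        Ring.jacobson R • (⊤ : Submodule R (s →₀ R)) := by
  classical
  obtain ⟨s, hs⟩ := exists_minimal_of_wellFoundedLT
    (fun s : Finset M ↦ Submodule.span R (s : Set M) = ⊤) Module.Finite.fg_top
  refine ⟨s, hs.prop, fun c hc ↦ ?_⟩
  have hcoeff (m : s) : c m ∈ Ring.jacobson R := by
    refine mem_jacobson_of_not_isUnit fun hm ↦ ?_
    have hmem := mem_span_erase_of_linearCombination_eq_zero hc hm
    have hspan : Submodule.span R (s.erase m : Set M) = ⊤ := by
      rw [← Submodule.span_insert_eq_span hmem, ← Finset.coe_insert, Finset.insert_erase m.2,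
        hs.prop]
    exact Finset.notMem_erase (m : M) s (hs.le_of_le hspan (Finset.erase_subset _ _) m.2)
  rw [← (Finsupp.basisSingleOne (R := R) (ι := s)).span_eq,
    Submodule.mem_ideal_smul_span_iff_exists_sum]
  exact ⟨c, hcoeff, by simp⟩

theorem ker_eq_bot_of_le_jacobson_smul_top {F : Type*} [AddCommGroup F] [Module R F]
    [Module.Finite R F] [Module.Projective R M] {f : F →ₗ[R] M} (hf : Function.Surjective f)
    (hker : LinearMap.ker f ≤ Ring.jacobson R • (⊤ : Submodule R F)) : LinearMap.ker f = ⊥ := by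
  obtain ⟨g, hg⟩ := Module.projective_lifting_property f LinearMap.id hf
  let q : F →ₗ[R] F := LinearMap.id - g ∘ₗ f
  have hqx {x : F} (hx : x ∈ LinearMap.ker f) : q x = x := by
    simp [q, LinearMap.mem_ker.1 hx]
  have hrange : LinearMap.range q = LinearMap.ker f := by
    refine le_antisymm ?_ fun x hx ↦ ⟨x, hqx hx⟩
    rintro _ ⟨x, rfl⟩
    have hfg : f (g (f x)) = f x := LinearMap.congr_fun hg (f x)
    simp [q, hfg]
  refine Submodule.FG.eq_bot_of_le_jacobson_smul ?_ ?_
  · rw [← hrange, LinearMap.range_eq_map]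
    exact Module.Finite.fg_top.map q
  · calc LinearMap.ker f ≤ (LinearMap.ker f).map q := fun x hx ↦ ⟨x, hx, hqx hx⟩
      _ ≤ (Ring.jacobson R • (⊤ : Submodule R F)).map q := Submodule.map_mono hker
      _ = Ring.jacobson R • LinearMap.ker f := by
        rw [Submodule.map_smul'', ← LinearMap.range_eq_map, hrange]

variable (R M) in
theorem free_of_finite_of_projective [IsLocalRing R] [Module.Finite R M] [Module.Projective R M] :
    Module.Free R M := by
  obtain ⟨s, hs, hker⟩ := exists_span_eq_top_ker_linearCombination_le R M
  have hsurj : Function.Surjective (Finsupp.linearCombination R ((↑) : s → M)) := by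
    rw [← LinearMap.range_eq_top, Finsupp.range_linearCombination, Subtype.range_coe]
    exact hs
  have hinj := LinearMap.ker_eq_bot.1 (ker_eq_bot_of_le_jacobson_smul_top hsurj hker)
  exact .of_equiv (LinearEquiv.ofBijective _ ⟨hinj, hsurj⟩)

end LocalRing

theorem dvd_of_dvd_add_of_addLECancellable {α : Type*} [NonUnitalSemiring α] [LinearOrder α]
    [CanonicallyOrderedAdd α] [Sub α] [OrderedSub α] {a b c : α} (hac : a ∣ c)
    (hc : AddLECancellable c) (h : a ∣ b + c) : a ∣ b := by
  obtain ⟨l, rfl⟩ := hac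
  obtain ⟨k, hk⟩ := h
  refine ⟨k - l, ?_⟩
  rw [hc.mul_tsub, ← hk, hc.add_tsub_cancel_right]

theorem length_end_dvd_homLength {R E : Type u} [Ring R] [IsLocalRing R] [IsNoetherianRing R]
    [AddCommGroup E] [Module R E] [Module.Injective R E]
    (hE : Module.length (Module.End R E) E ≠ ⊤) (n : ℕ) (M : Type u) [AddCommGroup M] [Module R M]
    [Module.Finite R M] (hM : HasProjectiveDimensionLT (ModuleCat.of R M) (n + 1)) :
    Module.length (Module.End R E) E ∣ homLength R M E := by
  induction n generalizing M with
  | zero =>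
    have : Projective (ModuleCat.of R M) := projective_iff_hasProjectiveDimensionLT_one.2 hM
    have : Module.Projective R M := (IsProjective.iff_projective M).2 this
    have := free_of_finite_of_projective R M
    exact Dvd.intro_left _ (homLength_eq_card_mul E (Module.Free.chooseBasis R M)).symm
  | succ n ih =>
    obtain ⟨k, f, hf⟩ := Module.Finite.exists_fin' R M
    have : Projective (ModuleCat.of R (Fin k → R)) :=
      (IsProjective.iff_projective _).1 inferInstance
    have hK : HasProjectiveDimensionLT (ModuleCat.of R (LinearMap.ker f)) (n + 1) :=
      (LinearMap.shortExact_shortComplexKer hf).hasProjectiveDimensionLT_X₁ (n + 1)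
        inferInstance hM
    have hadd := homLength_eq_add_of_exact (E := E) (LinearMap.ker f).injective_subtype hf
      (LinearMap.exact_subtype_ker_map f)
    rw [homLength_eq_card_mul E (Pi.basisFun R (Fin k))] at hadd
    have hK_ne_top : homLength R (LinearMap.ker f) E ≠ ⊤ :=
      ne_top_of_le_ne_top (WithTop.mul_ne_top ENat.card_lt_top_of_finite.ne hE)
        (hadd ▸ le_add_self)
    exact dvd_of_dvd_add_of_addLECancellable (ih (LinearMap.ker f) hK)
      (ENat.addLECancellable_of_ne_top hK_ne_top) (Dvd.intro_left _ hadd)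

theorem noZeroDivisors_of_isSimpleModule_end {R E : Type*} [Ring R] [AddCommGroup E] [Module R E]
    [IsSimpleModule (Module.End R E) E] {e : E} (he : Ideal.torsionOf R E e = ⊥) :
    NoZeroDivisors R where
  eq_zero_or_eq_zero_of_mul_eq_zero {x y} hxy := by
    have heq_zero {r : R} (hr : r • e = 0) : r = 0 := he.le hr
    refine or_iff_not_imp_right.2 fun hy ↦ heq_zero ?_
    obtain ⟨s, hs⟩ := IsSimpleModule.toSpanSingleton_surjective (Module.End R E)
      (mt heq_zero hy) e
    have hs : s (y • e) = e := hs
    rw [← hs, ← map_smul, ← mul_smul, hxy, zero_smul, map_zero]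

theorem subsingleton_abelianExt_succ {R : Type u} [Ring R] {M N : ModuleCat.{u} R} {n : ℕ}
    (h : Subsingleton (((Ext ℤ (ModuleCat.{u} R) (n + 1)).obj (op M)).obj N)) :
    Subsingleton (Abelian.Ext.{u} M N (n + 1)) := by
  let P : ProjectiveResolution M := ProjectiveResolution.of M
  have hzero := (ModuleCat.isZero_of_subsingleton _).of_iso (P.isoExt (R := ℤ) (n + 1) N).symm
  rw [← HomologicalComplex.exactAt_iff_isZero_homology,
    HomologicalComplex.exactAt_iff' _ n (n + 1) (n + 2) (by simp) (by simp),
    ShortComplex.moduleCat_exact_iff] at hzero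
  refine subsingleton_of_forall_eq 0 fun e ↦ ?_
  obtain ⟨f, hf, rfl⟩ := P.extMk_surjective e (n + 2) rfl
  rw [P.extMk_eq_zero_iff f (n + 2) rfl hf n rfl]
  exact hzero f hf

theorem projectiveDimension_ne_top_of_subsingleton_ext {R : Type u} [Ring R] {n : ℕ}
    {M : ModuleCat.{u} R}
    (h : ∀ N, Subsingleton (((Ext ℤ (ModuleCat.{u} R) (n + 1)).obj (op M)).obj N)) :
    projectiveDimension M ≠ ⊤ :=
  (projectiveDimension_ne_top_iff M).2
    ⟨n, hasProjectiveDimensionLT_of_enoughInjectives M (n + 1)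
      fun N ↦ subsingleton_abelianExt_succ (h N)⟩

theorem stmt_3_general (R : Type u) [Ring R] [IsLocalRing R] [IsNoetherianRing R]
    (hR : IsNonsingular R R)
    (hpd : ∀ I : Ideal R, projectiveDimension (ModuleCat.of R (R ⧸ I)) ≠ ⊤) : IsDomain R := by
  obtain ⟨E, f, _, hE, hf⟩ := exists_injective_isNonsingular hR
  have : Nontrivial (R →ₗ[R] E) := ⟨f, 0, by
    rintro rfl
    exact one_ne_zero (hf rfl : (1 : R) = 0)⟩
  obtain ⟨I, hI⟩ := exists_homLength_quotient_eq_one (M := R) hE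
  obtain ⟨n, hn⟩ := (projectiveDimension_ne_top_iff _).1 (hpd I)
  have hdvd := length_end_dvd_homLength (homLength_self R E ▸ homLength_ne_top R hE) n (R ⧸ I) hn
  have : IsSimpleModule (Module.End R E) E := by
    rw [← Module.length_eq_one_iff, ← isUnit_iff_eq_one]
    exact isUnit_of_dvd_one (hI ▸ hdvd)
  have hf_one : Ideal.torsionOf R E (f 1) = ⊥ := by
    refine eq_bot_iff.2 fun r hr ↦ hf ?_
    rwa [Ideal.mem_torsionOf_iff, ← map_smul, smul_eq_mul, mul_one, ← map_zero f] at hr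
  have := noZeroDivisors_of_isSimpleModule_end hf_one
  exact NoZeroDivisors.to_isDomain R

/-- Walker's theorem: a scalar local, (left and right) noetherian, semiprime
ring of finite global dimension is a domain.  Here "scalar local" is expressed as: every
element outside the Jacobson radical is a unit (so `R` modulo its Jacobson radical is a
division ring), "semiprime" as `aRa = 0 → a = 0`, and "finite global dimension" as the
vanishing of all Ext groups `Ext^(n+1)(M,N)` for some `n`. -/
theorem stmt_3 (R : Type u) [Ring R] [Nontrivial R]
    [IsNoetherianRing R] [IsNoetherianRing Rᵐᵒᵖ]
    (hscalarlocal : ∀ x : R, x ∉ (⊥ : Ideal R).jacobson → IsUnit x)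
    (hsemiprime : ∀ a : R, (∀ r : R, a * r * a = 0) → a = 0)
    (hgldim : ∃ n : ℕ, ∀ M N : ModuleCat.{u} R,
      Subsingleton (((Ext ℤ (ModuleCat.{u} R) (n + 1)).obj (op M)).obj N)) :
    IsDomain R :=
  have := isLocalRing_of_isUnit_of_notMem_jacobson (Ideal.jacobson_bot (R := R) ▸ hscalarlocal)
  stmt_3_general R (isNonsingular_self_of_semiprime hsemiprime)
    fun _ ↦ projectiveDimension_ne_top_of_subsingleton_ext (hgldim.choose_spec _)
end

section
/- There exists a continuous injective homomorphism of F_p-algebras from the power series ring F_p[[x,y,z]] in three variables to the power series ring F_p[[a,b]] in two variables. Concretely, choose u = u(a) ∈ a·F_p[[a]] such that a and u are algebraically independent over F_p; then the unique continuous F_p-algebra homomorphism θ with θ(x) = b, θ(y) = ab, θ(z) = ub is injective. -/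
/-!
Under the blow-up substitution `x ↦ b`, `y ↦ a * b`, `z ↦ u * b`, every monomial of degree `n` is
sent to `b ^ n` times a series in `a`. The coefficient of `b ^ n` in the image of `f` is therefore
the degree `n` part of `f`, dehomogenized and evaluated at `(a, u)`, and it vanishes only if that
part does, provided that `a` and `u` are algebraically independent.

Liouville's argument shows that `u = ∑ a ^ k`, with `k` running over the factorials, qualifies over
every commutative ring. Let `P` be a nonzero polynomial over `R[a]` and `v` the truncation of `u` of
degree `n!`. For large `n`, the top coefficient of `P(v)` comes from the leading term of `P` alone,
in a degree that is at most a constant multiple of `n!`. As `u - v` is divisible by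
`a ^ (n + 1)!`, this coefficient survives in `P(u)`.
-/

theorem algebraicIndependent_pair_of_transcendental {R S A : Type*} [CommRing R] [CommRing S]
    [CommRing A] [Algebra R S] [Algebra S A] [Algebra R A] [IsScalarTower R S A] {x : S} {y : A}
    (hx : Transcendental R x) (hy : Transcendental S y) :
    AlgebraicIndependent R ![algebraMap S A x, y] := by
  have hsum : AlgebraicIndependent R (Sum.elim ![y] (algebraMap S A ∘ ![x])) :=
    ((algebraicIndependent_singleton_iff 0).2 hx).sumElim_comp
      ((algebraicIndependent_singleton_iff 0).2 hy)
  refine (algebraicIndependent_equiv' ((Equiv.sumComm _ _).trans finSumFinEquiv) ?_).1 hsum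
  ext (i | i) <;> fin_cases i <;> rfl

section Liouville

open Polynomial

variable {R : Type*} [CommRing R]

theorem coeff_eval_of_natDegree_coeff_lt {P : R[X][X]} {v : R[X]} (hv : v.Monic)
    (hP : ∀ i, (P.coeff i).natDegree < v.natDegree) :
    (P.eval v).coeff (P.leadingCoeff.natDegree + P.natDegree * v.natDegree) =
      P.leadingCoeff.leadingCoeff := by
  have lower_terms (i : ℕ) (hi : i ∈ Finset.range P.natDegree) :
      (P.coeff i * v ^ i).coeff (P.leadingCoeff.natDegree + P.natDegree * v.natDegree) = 0 := by
    refine coeff_eq_zero_of_natDegree_lt ?_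
    calc (P.coeff i * v ^ i).natDegree
        ≤ (P.coeff i).natDegree + i * v.natDegree :=
          natDegree_mul_le.trans (Nat.add_le_add_left natDegree_pow_le _)
      _ < v.natDegree + i * v.natDegree := Nat.add_lt_add_right (hP i) _
      _ = (i + 1) * v.natDegree := by ring
      _ ≤ P.natDegree * v.natDegree := Nat.mul_le_mul_right _ (Finset.mem_range.1 hi)
      _ ≤ _ := Nat.le_add_left _ _
  have top_term : (v ^ P.natDegree).coeff (P.natDegree * v.natDegree) = 1 := by
    rw [← hv.natDegree_pow]
    exact hv.pow _
  rw [eval_eq_sum_range, Finset.sum_range_succ, coeff_add, finsetSum_coeff,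
    Finset.sum_eq_zero lower_terms, zero_add, coeff_natDegree,
    coeff_mul_add_eq_of_natDegree_le le_rfl natDegree_pow_le, top_term, mul_one, coeff_natDegree]

theorem transcendental_of_forall_exists_X_pow_dvd_sub {u : PowerSeries R}
    (hu : ∀ m : ℕ, ∃ v : R[X], v.Monic ∧ m < v.natDegree ∧
      PowerSeries.X ^ (m * v.natDegree) ∣ u - (v : PowerSeries R)) :
    Transcendental R[X] u := by
  refine transcendental_iff.2 fun P hPu => ?_
  let D := P.support.sup fun i => (P.coeff i).natDegree
  have hD (i : ℕ) : (P.coeff i).natDegree ≤ D := by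
    by_cases hi : i ∈ P.support
    · exact Finset.le_sup (f := fun i => (P.coeff i).natDegree) hi
    · simp [notMem_support_iff.1 hi]
  obtain ⟨v, hv, hlt, hdvd⟩ := hu (D + P.natDegree + 1)
  have hP (i : ℕ) : (P.coeff i).natDegree < v.natDegree := by
    have := hD i
    omega
  have aeval_v : aeval (v : PowerSeries R) P = (P.eval v : R[X]) := by
    have := aeval_algebraMap_apply (PowerSeries R) v P
    simpa [PowerSeries.algebraMap_apply'] using this
  have hdvd_eval : PowerSeries.X ^ ((D + P.natDegree + 1) * v.natDegree) ∣
      ((P.eval v : R[X]) : PowerSeries R) := by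
    have := hdvd.trans (sub_dvd_eval_sub u v (P.map (algebraMap R[X] (PowerSeries R))))
    rwa [eval_map_algebraMap, eval_map_algebraMap, hPu, zero_sub, dvd_neg, aeval_v] at this
  have small : P.leadingCoeff.natDegree + P.natDegree * v.natDegree <
      (D + P.natDegree + 1) * v.natDegree := by
    calc P.leadingCoeff.natDegree + P.natDegree * v.natDegree
        < v.natDegree + P.natDegree * v.natDegree := Nat.add_lt_add_right (hP _) _
      _ = (P.natDegree + 1) * v.natDegree := by ring
      _ ≤ (D + P.natDegree + 1) * v.natDegree := Nat.mul_le_mul_right _ (by omega)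
  have := PowerSeries.X_pow_dvd_iff.1 hdvd_eval _ small
  rwa [coeff_coe, coeff_eval_of_natDegree_coeff_lt hv hP, leadingCoeff_eq_zero,
    leadingCoeff_eq_zero] at this

variable (R) in
/-- The lacunary power series `∑ X ^ k`, where `k` runs over the set of factorials `{1, 2, 6, …}`;
an analogue of Liouville's number. -/
noncomputable def liouvilleSeries : PowerSeries R :=
  open Classical in PowerSeries.mk fun k => if k ∈ Set.range Nat.factorial then 1 else 0

theorem coeff_factorial_liouvilleSeries (n : ℕ) :
    PowerSeries.coeff n.factorial (liouvilleSeries R) = 1 := by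
  simp [liouvilleSeries]

theorem coeff_liouvilleSeries_of_factorial_lt_of_lt {n k : ℕ} (hn : n.factorial < k)
    (hk : k < (n + 1).factorial) : PowerSeries.coeff k (liouvilleSeries R) = 0 := by
  rw [liouvilleSeries, PowerSeries.coeff_mk, if_neg]
  rintro ⟨j, rfl⟩
  have hnj := Nat.monotone_factorial.reflect_lt hn
  have hjn := Nat.monotone_factorial.reflect_lt hk
  omega

theorem transcendental_liouvilleSeries : Transcendental R[X] (liouvilleSeries R) := by
  cases subsingleton_or_nontrivial R
  · exact transcendental_iff.2 fun P _ => Subsingleton.elim P 0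
  refine transcendental_of_forall_exists_X_pow_dvd_sub fun m => ?_
  let n := m + 1
  let v := PowerSeries.trunc (n + 1).factorial (liouvilleSeries R)
  have coeff_v : v.coeff n.factorial = 1 := by
    rw [PowerSeries.coeff_trunc, coeff_factorial_liouvilleSeries,
      if_pos (Nat.factorial_lt_of_lt (Nat.succ_pos m) n.lt_succ_self)]
  have natDegree_v_le : v.natDegree ≤ n.factorial := by
    refine natDegree_le_iff_coeff_eq_zero.2 fun k hk => ?_
    rw [PowerSeries.coeff_trunc]
    exact ite_eq_right_iff.2 (coeff_liouvilleSeries_of_factorial_lt_of_lt hk)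
  have natDegree_v : v.natDegree = n.factorial :=
    natDegree_eq_of_le_of_coeff_ne_zero natDegree_v_le (coeff_v ▸ one_ne_zero)
  refine ⟨v, monic_of_natDegree_le_of_coeff_eq_one _ natDegree_v_le coeff_v, ?_, ?_⟩ <;>
    rw [natDegree_v]
  · exact Nat.self_le_factorial n
  · have hmn : m * n.factorial ≤ (n + 1).factorial := Nat.mul_le_mul_right _ (by omega)
    refine (pow_dvd_pow _ hmn).trans (PowerSeries.X_pow_dvd_iff.2 fun k hk => ?_)
    rw [map_sub, PowerSeries.coeff_coe_trunc_of_lt hk, sub_self]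

theorem algebraicIndependent_X_liouvilleSeries :
    AlgebraicIndependent R ![PowerSeries.X, liouvilleSeries R] := by
  simpa [PowerSeries.algebraMap_apply'] using
    algebraicIndependent_pair_of_transcendental (transcendental_X R) transcendental_liouvilleSeries

end Liouville

theorem degree_eq_apply_zero_add_degree_tail {M : Type*} [AddCommMonoid M] {m : ℕ}
    (d : Fin (m + 1) →₀ M) : d.degree = d 0 + d.tail.degree := by
  simp [Finsupp.degree_eq_sum, Fin.sum_univ_succ, Finsupp.tail_apply]

theorem eq_of_degree_eq_of_tail_eq {M : Type*} [AddCommMonoid M] [IsRightCancelAdd M] {m : ℕ}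
    {d d' : Fin (m + 1) →₀ M} (hdeg : d.degree = d'.degree) (htail : d.tail = d'.tail) :
    d = d' := by
  have h0 : d 0 = d' 0 := by
    simpa [degree_eq_apply_zero_add_degree_tail, htail] using hdeg
  rw [← d.cons_tail, ← d'.cons_tail, h0, htail]

section BlowUp

open MvPowerSeries
open scoped MvPowerSeries.WithPiTopology

variable {R : Type*} [CommRing R] {m k : ℕ}

/-- The blow-up family `b, v₁ * b, …, vₘ * b` in `R⟦b, a₁, …, aₖ⟧` attached to power series
`v₁, …, vₘ` in `a₁, …, aₖ`. The variable `b` is `X 0`. -/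
noncomputable def blowUpFamily (v : Fin m → MvPowerSeries (Fin k) R) :
    Fin (m + 1) → MvPowerSeries (Fin (k + 1)) R :=
  Fin.cons (X 0) fun i => (finSuccEquiv R k).symm (PowerSeries.C (v i)) * X 0

theorem hasSubst_blowUpFamily (v : Fin m → MvPowerSeries (Fin k) R) :
    HasSubst (blowUpFamily v) := by
  refine hasSubst_of_constantCoeff_zero fun s => ?_
  cases s using Fin.cases <;> simp [blowUpFamily]

/-- The continuous algebra homomorphism sending the variables to the blow-up family of `v`. -/
noncomputable def blowUpHom (v : Fin m → MvPowerSeries (Fin k) R) :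
    MvPowerSeries (Fin (m + 1)) R →ₐ[R] MvPowerSeries (Fin (k + 1)) R :=
  substAlgHom (hasSubst_blowUpFamily v)

theorem finSuccEquiv_prod_blowUpFamily (v : Fin m → MvPowerSeries (Fin k) R)
    (d : Fin (m + 1) →₀ ℕ) :
    finSuccEquiv R k (d.prod fun s e => blowUpFamily v s ^ e) =
      PowerSeries.C (d.tail.prod fun i e => v i ^ e) * PowerSeries.X ^ d.degree := by
  rw [degree_eq_apply_zero_add_degree_tail, Finsupp.degree_eq_sum,
    Finsupp.prod_fintype _ _ fun _ => pow_zero _, Finsupp.prod_fintype _ _ fun _ => pow_zero _,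
    Fin.prod_univ_succ]
  simp only [blowUpFamily, Fin.cons_zero, Fin.cons_succ, map_mul, map_pow, map_prod,
    finSuccEquiv_X_zero, AlgEquiv.apply_symm_apply, Finsupp.tail_apply, mul_pow,
    Finset.prod_mul_distrib, Finset.prod_pow_eq_pow_sum, pow_add]
  ring

theorem coeff_cons_blowUpHom (v : Fin m → MvPowerSeries (Fin k) R)
    (f : MvPowerSeries (Fin (m + 1)) R) (n : ℕ) (e : Fin k →₀ ℕ) :
    coeff (e.cons n) (blowUpHom v f) =
      ∑ d ∈ (Finsupp.finite_of_degree_eq (σ := Fin (m + 1)) n).toFinset,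
        coeff d f * coeff e (d.tail.prod fun i j => v i ^ j) := by
  classical
  have coeff_term (d : Fin (m + 1) →₀ ℕ) :
      coeff (e.cons n) (d.prod fun s j => blowUpFamily v s ^ j) =
        if d.degree = n then coeff e (d.tail.prod fun i j => v i ^ j) else 0 := by
    rw [← coeff_coeff_finSuccEquiv, finSuccEquiv_prod_blowUpFamily, PowerSeries.coeff_C_mul_X_pow]
    split_ifs <;> simp_all
  rw [blowUpHom, substAlgHom_apply, coeff_subst (hasSubst_blowUpFamily v),
    finsum_eq_sum_of_support_subset]
  · refine Finset.sum_congr rfl fun d hd => ?_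
    rw [coeff_term, if_pos (by simpa using hd), smul_eq_mul]
  · intro d hd
    rw [Function.mem_support, coeff_term] at hd
    simpa using (ite_ne_right_iff.1 (right_ne_zero_of_smul hd)).1

theorem continuous_blowUpHom [TopologicalSpace R] [IsTopologicalSemiring R]
    (v : Fin m → MvPowerSeries (Fin k) R) : Continuous (blowUpHom v) := by
  refine continuous_pi fun e => ?_
  obtain ⟨n, e, rfl⟩ : ∃ n e', e = Finsupp.cons n e' := ⟨e 0, e.tail, e.cons_tail.symm⟩
  refine Continuous.congr ?_ fun f => (coeff_cons_blowUpHom v f n e).symm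
  exact continuous_finsetSum _ fun d _ => (WithPiTopology.continuous_coeff R d).mul continuous_const

/-- The homogeneous component of degree `n` of `f`, with the first variable set to `1`. -/
noncomputable def dehomogenizedComponent (n : ℕ) (f : MvPowerSeries (Fin (m + 1)) R) :
    MvPolynomial (Fin m) R :=
  ∑ d ∈ (Finsupp.finite_of_degree_eq (σ := Fin (m + 1)) n).toFinset,
    MvPolynomial.monomial d.tail (coeff d f)

theorem coeff_tail_dehomogenizedComponent (f : MvPowerSeries (Fin (m + 1)) R)
    (d : Fin (m + 1) →₀ ℕ) :
    (dehomogenizedComponent d.degree f).coeff d.tail = coeff d f := by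
  classical
  rw [dehomogenizedComponent, MvPolynomial.coeff_sum, Finset.sum_eq_single d]
  · simp
  · intro d' hd' hne
    have hdeg : d'.degree = d.degree := by simpa using hd'
    rw [MvPolynomial.coeff_monomial,
      if_neg fun htail => hne (eq_of_degree_eq_of_tail_eq hdeg htail)]
  · simp

theorem coeff_finSuccEquiv_blowUpHom (v : Fin m → MvPowerSeries (Fin k) R)
    (f : MvPowerSeries (Fin (m + 1)) R) (n : ℕ) :
    PowerSeries.coeff n (finSuccEquiv R k (blowUpHom v f)) =
      MvPolynomial.aeval v (dehomogenizedComponent n f) := by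
  ext e
  simp only [coeff_coeff_finSuccEquiv, coeff_cons_blowUpHom, dehomogenizedComponent, map_sum,
    MvPolynomial.aeval_monomial, ← Algebra.smul_def, MvPowerSeries.coeff_smul]

theorem blowUpHom_injective {v : Fin m → MvPowerSeries (Fin k) R}
    (hv : AlgebraicIndependent R v) : Function.Injective (blowUpHom v) := by
  refine (injective_iff_map_eq_zero _).2 fun f hf => ?_
  have component_eq_zero (n : ℕ) : dehomogenizedComponent n f = 0 :=
    hv.eq_zero_of_aeval_eq_zero _ (by rw [← coeff_finSuccEquiv_blowUpHom, hf, map_zero, map_zero])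
  ext d
  rw [← coeff_tail_dehomogenizedComponent, component_eq_zero, MvPolynomial.coeff_zero, map_zero]

theorem stmt_6_general (R : Type*) [CommRing R] [TopologicalSpace R] [IsTopologicalSemiring R] :
    ∃ θ : MvPowerSeries (Fin 3) R →ₐ[R] MvPowerSeries (Fin 2) R,
      Continuous θ ∧ Function.Injective θ := by
  have independent := (algebraicIndependent_X_liouvilleSeries (R := R)).map'
    (PowerSeries.toMvPowerSeries_injective (0 : Fin 1))
  exact ⟨blowUpHom _, continuous_blowUpHom _, blowUpHom_injective independent⟩

end BlowUp

/-- there is a continuous injective homomorphism of `F_p`-algebras from the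
power series ring `F_p[[x,y,z]]` in three variables to the power series ring `F_p[[a,b]]`
in two variables.  Here each power series ring `F_p[[X_i]] = ((σ →₀ ℕ) → F_p)` carries its
natural (product of discrete) topology. -/
theorem stmt_6 (p : ℕ) [Fact p.Prime] :
    letI : TopologicalSpace (ZMod p) := ⊥
    letI : TopologicalSpace (MvPowerSeries (Fin 3) (ZMod p)) :=
      inferInstanceAs (TopologicalSpace ((Fin 3 →₀ ℕ) → ZMod p))
    letI : TopologicalSpace (MvPowerSeries (Fin 2) (ZMod p)) :=
      inferInstanceAs (TopologicalSpace ((Fin 2 →₀ ℕ) → ZMod p))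
    ∃ θ : MvPowerSeries (Fin 3) (ZMod p) →ₐ[ZMod p] MvPowerSeries (Fin 2) (ZMod p),
      Continuous θ ∧ Function.Injective θ := by
  let : TopologicalSpace (ZMod p) := ⊥
  have : DiscreteTopology (ZMod p) := ⟨rfl⟩
  exact stmt_6_general (ZMod p)
end
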